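/- arXiv:1905.08229 — 2 statements merged into one kernel-verified Lean document; each statement's English description precedes it below -/
import Mathlib

section
/- Fix a commutative ring A with a δ-structure δ_A and an element x ∈ A. Then there exist a commutative ring B with a δ-structure δ_B, a faithfully flat ring homomorphism f : A → B commuting with the δ-structures (f ∘ δ_A = δ_B ∘ f), and an element y ∈ B such that f(x) = φ_B(y) = y^p + p·δ_B(y). -/
/-!
In a δ-ring over `A`, the equation `φ(y) = x` forces `φ(δⁱ y) = δⁱ x`, because `φ` commutes with `δ`.
So the universal candidate is the quotient `B` of the polynomial ring `A[y₀, y₁, …]` by the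
relations `rᵢ = yᵢ ^ p + p * yᵢ₊₁ - δⁱ x`, with `δ yᵢ = yᵢ₊₁`.

*The δ-structure.* A δ-structure is the same as a ring-homomorphic section of the projection from
the length two Witt vectors `WTwo p B` to `B`. The map `A[y₀, …] → WTwo p B` extending the section
of `A` and sending `yᵢ` to `(yᵢ, yᵢ₊₁)` kills each `rᵢ`, since by `WTwo.frobenius_eq`
`(yᵢ, yᵢ₊₁) ^ p + p * (yᵢ₊₁, yᵢ₊₂) = (φ yᵢ, φ yᵢ₊₁)`, which is `(δⁱ x, δⁱ⁺¹ x)` in `B`. Hence it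
descends to `B`. Identities in `WTwo` are checked over `ℤ[a, b, c]`, which has no `p`-torsion.

*Faithful flatness.* `B` is free over `A` on the monomials with all exponents less than `p`.
Writing an exponent as `p * k + e` with `e` reduced, the linear map `y ^ (p * k + e) ↦ r ^ k * y ^ e`
is the identity up to terms of lower total degree, because `rᵢ` has leading form `yᵢ ^ p`
(here `1 < p` is used); so it is bijective (`stdMap_bijective`). The elements `r ^ k * y ^ e` thus
form a basis of `A[y₀, …]`, and those with `k ≠ 0` span the ideal generated by the `rᵢ`
(`faithfullyFlat_quotient`).
-/

/-- `deltaE p x y` is the evaluation at `(x, y)` of the integer polynomial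
`(X^p + Y^p - (X+Y)^p)/p ∈ ℤ[X,Y]` (for `p` prime). -/
def deltaE (p : ℕ) {A : Type*} [CommRing A] (x y : A) : A :=
  - ∑ i ∈ Finset.Ioo 0 p, ((p.choose i / p : ℕ) : A) * x ^ i * y ^ (p - i)

/-- A δ-structure on a commutative ring `A` for the prime `p`. -/
structure IsDeltaStructure (p : ℕ) {A : Type*} [CommRing A] (δ : A → A) : Prop where
  map_zero : δ 0 = 0
  map_one : δ 1 = 0
  map_mul : ∀ x y : A, δ (x * y) = x ^ p * δ y + y ^ p * δ x + (p : A) * δ x * δ y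
  map_add : ∀ x y : A, δ (x + y) = δ x + δ y + deltaE p x y
universe u


/-! ### The polynomial `E` -/

section E

variable {p : ℕ} {R S : Type*} [CommRing R] [CommRing S]

lemma map_deltaE (f : R →+* S) (x y : R) : f (deltaE p x y) = deltaE p (f x) (f y) := by
  simp [deltaE]

variable [hp : Fact p.Prime]

lemma p_mul_deltaE (x y : R) : (p : R) * deltaE p x y = x ^ p + y ^ p - (x + y) ^ p := by
  have h1 : (x + y) ^ p = y ^ p + (∑ i ∈ Finset.Ioo 0 p, x ^ i * y ^ (p - i) * (p.choose i : R))
      + x ^ p := by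
    have h0 : Finset.Ioo 0 p = Finset.Ico 1 p := by ext; simp; omega
    rw [add_pow, Finset.sum_range_succ, Finset.range_eq_Ico,
      Finset.sum_eq_sum_Ico_succ_bot hp.out.pos, h0]
    simp
  have h2 : ∀ i ∈ Finset.Ioo 0 p, x ^ i * y ^ (p - i) * (p.choose i : R)
      = (p : R) * (((p.choose i / p : ℕ) : R) * x ^ i * y ^ (p - i)) := by
    intro i hi
    rw [Finset.mem_Ioo] at hi
    have h3 : p.choose i = p * (p.choose i / p) :=
      (Nat.mul_div_cancel' (hp.out.dvd_choose_self hi.1.ne' hi.2)).symm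
    conv_lhs => rw [h3]
    push_cast
    ring
  rw [h1, Finset.sum_congr rfl h2, deltaE, ← Finset.mul_sum]
  ring

/-- The integral polynomial ring in three variables has no `p`-torsion; identities between
polynomial expressions are checked there after multiplication by `p`, then specialized. -/
lemma eq_of_p_mul_eq {f g : MvPolynomial (Fin 3) ℤ}
    (h : (p : MvPolynomial (Fin 3) ℤ) * f = (p : MvPolynomial (Fin 3) ℤ) * g) : f = g :=
  mul_left_cancel₀ (Nat.cast_ne_zero.mpr hp.out.ne_zero) h

lemma exists_eval (x y z : R) : ∃ e : MvPolynomial (Fin 3) ℤ →+* R,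
    e (MvPolynomial.X 0) = x ∧ e (MvPolynomial.X 1) = y ∧ e (MvPolynomial.X 2) = z :=
  ⟨MvPolynomial.eval₂Hom (Int.castRingHom R) ![x, y, z], by simp, by simp, by simp⟩

lemma deltaE_comm (x y : R) : deltaE p x y = deltaE p y x := by
  have h : deltaE p (MvPolynomial.X 0 : MvPolynomial (Fin 3) ℤ) (MvPolynomial.X 1)
      = deltaE p (MvPolynomial.X 1) (MvPolynomial.X 0) := by
    apply eq_of_p_mul_eq (p := p)
    rw [p_mul_deltaE, p_mul_deltaE]
    ring
  obtain ⟨e, h0, h1, h2⟩ := exists_eval x y (0 : R)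
  simpa [map_deltaE, h0, h1, h2] using congrArg e h

lemma deltaE_zero_left (y : R) : deltaE p 0 y = 0 := by
  have h : deltaE p (0 : MvPolynomial (Fin 3) ℤ) (MvPolynomial.X 1) = 0 := by
    apply eq_of_p_mul_eq (p := p)
    rw [p_mul_deltaE]
    simp [hp.out.ne_zero]
  obtain ⟨e, h0, h1, h2⟩ := exists_eval (0 : R) y (0 : R)
  simpa [map_deltaE, h0, h1, h2] using congrArg e h

lemma deltaE_assoc (x y z : R) :
    deltaE p x y + deltaE p (x + y) z = deltaE p y z + deltaE p x (y + z) := by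
  have h : deltaE p (MvPolynomial.X 0 : MvPolynomial (Fin 3) ℤ) (MvPolynomial.X 1)
      + deltaE p (MvPolynomial.X 0 + MvPolynomial.X 1) (MvPolynomial.X 2)
      = deltaE p (MvPolynomial.X 1) (MvPolynomial.X 2)
      + deltaE p (MvPolynomial.X 0) (MvPolynomial.X 1 + MvPolynomial.X 2) := by
    apply eq_of_p_mul_eq (p := p)
    rw [mul_add, mul_add, p_mul_deltaE, p_mul_deltaE, p_mul_deltaE, p_mul_deltaE]
    ring
  obtain ⟨e, h0, h1, h2⟩ := exists_eval x y z
  simpa [map_deltaE, h0, h1, h2] using congrArg e h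

lemma deltaE_mul (x y z : R) : deltaE p (x * z) (y * z) = z ^ p * deltaE p x y := by
  have h : deltaE p ((MvPolynomial.X 0 : MvPolynomial (Fin 3) ℤ) * MvPolynomial.X 2)
      (MvPolynomial.X 1 * MvPolynomial.X 2)
      = MvPolynomial.X 2 ^ p * deltaE p (MvPolynomial.X 0) (MvPolynomial.X 1) := by
    apply eq_of_p_mul_eq (p := p)
    rw [mul_left_comm, p_mul_deltaE, p_mul_deltaE, ← add_mul]
    simp only [mul_pow]
    ring
  obtain ⟨e, h0, h1, h2⟩ := exists_eval x y z
  simpa [map_deltaE, h0, h1, h2] using congrArg e h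

end E

/-! ### Witt vectors of length two -/

/-- The ring of `p`-typical Witt vectors of length two over `R`, normalized so that the sections
of the projection to the first coordinate are exactly the maps `a ↦ (a, δ a)` with `δ` a
δ-structure. -/
@[ext]
structure WTwo (p : ℕ) (R : Type*) where
  /-- The zeroth Witt coordinate. -/
  fst : R
  /-- The first Witt coordinate. -/
  snd : R

namespace WTwo

variable {p : ℕ} {R S : Type*} [CommRing R] [CommRing S]

instance : Zero (WTwo p R) := ⟨⟨0, 0⟩⟩
instance : One (WTwo p R) := ⟨⟨1, 0⟩⟩
instance : Add (WTwo p R) := ⟨fun a b => ⟨a.fst + b.fst, a.snd + b.snd + deltaE p a.fst b.fst⟩⟩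
instance : Mul (WTwo p R) := ⟨fun a b => ⟨a.fst * b.fst,
  a.fst ^ p * b.snd + b.fst ^ p * a.snd + (p : R) * a.snd * b.snd⟩⟩
instance : Neg (WTwo p R) := ⟨fun a => ⟨-a.fst, -a.snd - deltaE p a.fst (-a.fst)⟩⟩

@[simp] lemma zero_fst : (0 : WTwo p R).fst = 0 := rfl
@[simp] lemma zero_snd : (0 : WTwo p R).snd = 0 := rfl
@[simp] lemma one_fst : (1 : WTwo p R).fst = 1 := rfl
@[simp] lemma one_snd : (1 : WTwo p R).snd = 0 := rfl
@[simp] lemma add_fst (a b : WTwo p R) : (a + b).fst = a.fst + b.fst := rfl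
@[simp] lemma add_snd (a b : WTwo p R) :
    (a + b).snd = a.snd + b.snd + deltaE p a.fst b.fst := rfl
@[simp] lemma mul_fst (a b : WTwo p R) : (a * b).fst = a.fst * b.fst := rfl
@[simp] lemma mul_snd (a b : WTwo p R) : (a * b).snd =
    a.fst ^ p * b.snd + b.fst ^ p * a.snd + (p : R) * a.snd * b.snd := rfl
@[simp] lemma neg_fst (a : WTwo p R) : (-a).fst = -a.fst := rfl
@[simp] lemma neg_snd (a : WTwo p R) : (-a).snd = -a.snd - deltaE p a.fst (-a.fst) := rfl

lemma mul_comm_aux (a b : WTwo p R) : a * b = b * a := by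
  ext
  · simp [mul_comm]
  · simp; ring

lemma one_mul_aux (a : WTwo p R) : 1 * a = a := by
  ext <;> simp

variable [hp : Fact p.Prime]

lemma add_comm_aux (a b : WTwo p R) : a + b = b + a := by
  ext
  · simp [add_comm]
  · simp [add_comm, deltaE_comm a.fst]

lemma zero_add_aux (a : WTwo p R) : 0 + a = a := by
  ext <;> simp [deltaE_zero_left]

lemma zero_mul_aux (a : WTwo p R) : 0 * a = 0 := by
  ext <;> simp [hp.out.ne_zero]

lemma right_distrib_aux (a b c : WTwo p R) : (a + b) * c = a * c + b * c := by
  ext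
  · simp [add_mul]
  · simp only [mul_snd, add_fst, add_snd, mul_fst, deltaE_mul]
    linear_combination c.snd * p_mul_deltaE (p := p) a.fst b.fst

instance : CommRing (WTwo p R) where
  add_assoc a b c := by
    ext
    · simp [add_assoc]
    · simp only [add_snd, add_fst]
      linear_combination deltaE_assoc (p := p) a.fst b.fst c.fst
  zero_add := zero_add_aux
  add_zero a := by rw [add_comm_aux, zero_add_aux]
  add_comm := add_comm_aux
  mul_comm := mul_comm_aux
  mul_assoc a b c := by
    ext
    · simp [mul_assoc]
    · simp; ring
  one_mul := one_mul_aux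
  mul_one a := by rw [mul_comm_aux, one_mul_aux]
  zero_mul := zero_mul_aux
  mul_zero a := by rw [mul_comm_aux, zero_mul_aux]
  right_distrib := right_distrib_aux
  left_distrib a b c := by
    rw [mul_comm_aux, right_distrib_aux, mul_comm_aux b, mul_comm_aux c]
  neg_add_cancel a := by
    ext
    · simp
    · simp only [add_snd, neg_snd, neg_fst, zero_snd, deltaE_comm (-a.fst) a.fst]
      ring
  nsmul := nsmulRec
  zsmul := zsmulRec

/-- Functoriality of length two Witt vectors. -/
def map (f : R →+* S) : WTwo p R →+* WTwo p S where
  toFun a := ⟨f a.fst, f a.snd⟩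
  map_zero' := by ext <;> simp
  map_one' := by ext <;> simp
  map_add' a b := by ext <;> simp [map_deltaE]
  map_mul' a b := by ext <;> simp

@[simp] lemma map_mk (f : R →+* S) (a b : R) : map f (⟨a, b⟩ : WTwo p R) = ⟨f a, f b⟩ := rfl

variable (p R) in
/-- The projection to the zeroth coordinate. -/
def fstHom : WTwo p R →+* R where
  toFun := fst
  map_zero' := rfl
  map_one' := rfl
  map_add' _ _ := rfl
  map_mul' _ _ := rfl

variable (p R) in
/-- The first ghost component `(a, b) ↦ a ^ p + p * b`. -/
def ghost : WTwo p R →+* R where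
  toFun a := a.fst ^ p + p * a.snd
  map_zero' := by simp [hp.out.ne_zero]
  map_one' := by simp
  map_add' a b := by
    simp only [add_fst, add_snd]
    linear_combination p_mul_deltaE (p := p) a.fst b.fst
  map_mul' a b := by
    simp only [mul_fst, mul_snd]
    ring

/-- The Frobenius of length two Witt vectors expressed in the ring structure: if `b = δ a` and
`c = δ b`, this says that `δ (φ a) = φ (δ a)`. Both sides have the same ghost components, which
suffices in the universal case `ℤ[a, b, c]`. -/
lemma frobenius_eq (a b c : R) :
    (⟨a, b⟩ : WTwo p R) ^ p + (p : WTwo p R) * ⟨b, c⟩ = ⟨a ^ p + p * b, b ^ p + p * c⟩ := by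
  have h : (⟨MvPolynomial.X 0, MvPolynomial.X 1⟩ : WTwo p (MvPolynomial (Fin 3) ℤ)) ^ p
      + (p : WTwo p (MvPolynomial (Fin 3) ℤ)) * ⟨MvPolynomial.X 1, MvPolynomial.X 2⟩
      = ⟨MvPolynomial.X 0 ^ p + (p : MvPolynomial (Fin 3) ℤ) * MvPolynomial.X 1,
        MvPolynomial.X 1 ^ p + (p : MvPolynomial (Fin 3) ℤ) * MvPolynomial.X 2⟩ := by
    set l := (⟨MvPolynomial.X 0, MvPolynomial.X 1⟩ : WTwo p (MvPolynomial (Fin 3) ℤ)) ^ p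
      + (p : WTwo p (MvPolynomial (Fin 3) ℤ)) * ⟨MvPolynomial.X 1, MvPolynomial.X 2⟩ with hl
    have h1 : l.fst = MvPolynomial.X 0 ^ p + (p : MvPolynomial (Fin 3) ℤ) * MvPolynomial.X 1 := by
      change fstHom p _ l = _
      rw [hl, map_add, map_mul, map_pow, map_natCast]
      rfl
    have h2 : l.fst ^ p + (p : MvPolynomial (Fin 3) ℤ) * l.snd
        = (MvPolynomial.X 0 ^ p + (p : MvPolynomial (Fin 3) ℤ) * MvPolynomial.X 1) ^ p
        + (p : MvPolynomial (Fin 3) ℤ) * (MvPolynomial.X 1 ^ p + (p : MvPolynomial (Fin 3) ℤ) * MvPolynomial.X 2) := by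
      change ghost p _ l = _
      rw [hl, map_add, map_mul, map_pow, map_natCast]
      rfl
    ext1
    · exact h1
    · rw [h1] at h2
      exact eq_of_p_mul_eq (add_left_cancel h2)
  obtain ⟨e, h0, h1, h2⟩ := exists_eval a b c
  simpa [h0, h1, h2] using congrArg (map e) h

end WTwo

/-- A δ-structure, seen as a section of the projection from length two Witt vectors. -/
def deltaSection {p : ℕ} [Fact p.Prime] {A : Type*} [CommRing A] {δ : A → A}
    (h : IsDeltaStructure p δ) : A →+* WTwo p A where
  toFun a := ⟨a, δ a⟩
  map_zero' := by ext <;> simp [h.map_zero]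
  map_one' := by ext <;> simp [h.map_one]
  map_add' a b := by ext <;> simp [h.map_add]
  map_mul' a b := by ext <;> simp [h.map_mul]

lemma isDeltaStructure_of_section {p : ℕ} [Fact p.Prime] {B : Type*} [CommRing B]
    (s : B →+* WTwo p B) (hs : ∀ b, (s b).fst = b) :
    IsDeltaStructure p (fun b => (s b).snd) where
  map_zero := by simp
  map_one := by simp
  map_mul x y := by simp [hs]
  map_add x y := by simp [hs]

/-! ### A monomial basis of the quotient -/

section Basis

open MvPolynomial

variable {A : Type*} [CommRing A]

variable (A) in
/-- Polynomials all of whose monomials have total degree less than `d`. -/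
noncomputable abbrev degLT (d : ℕ) : Submodule A (MvPolynomial ℕ A) :=
  restrictSupport A {m | m.degree < d}

lemma mul_mem_degLT {f g : MvPolynomial ℕ A} {a b c : ℕ} (hf : f ∈ degLT A a) (hg : g ∈ degLT A b)
    (h : a + b ≤ c + 1) : f * g ∈ degLT A c := by
  have h1 : f * g ∈ degLT A a * degLT A b := Submodule.mul_mem_mul hf hg
  rw [← restrictSupport_add] at h1
  refine restrictSupport_mono A ?_ h1
  rintro _ ⟨m, hm, n, hn, rfl⟩
  simp only [Set.mem_ofPred_eq, map_add] at *
  omega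

lemma degLT_mono {a b : ℕ} (h : a ≤ b) : degLT A a ≤ degLT A b :=
  restrictSupport_mono A fun _ hm => lt_of_lt_of_le hm h

lemma monomial_mem_degLT (m : ℕ →₀ ℕ) (a : A) : monomial m a ∈ degLT A (m.degree + 1) := by
  simp

/-- `f` has leading form the monomial `m`: it differs from it by terms of smaller degree. -/
def HasLead (f : MvPolynomial ℕ A) (m : ℕ →₀ ℕ) : Prop :=
  f - monomial m 1 ∈ degLT A m.degree

lemma hasLead_monomial (m : ℕ →₀ ℕ) : HasLead (monomial m (1 : A)) m := by
  simp [HasLead]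

lemma HasLead.mul {f g : MvPolynomial ℕ A} {m n : ℕ →₀ ℕ} (hf : HasLead f m) (hg : HasLead g n) :
    HasLead (f * g) (m + n) := by
  unfold HasLead at *
  have h : f * g - monomial (m + n) 1 = (f - monomial m 1) * (g - monomial n 1)
      + monomial m 1 * (g - monomial n 1) + (f - monomial m 1) * monomial n 1 := by
    have : monomial (m + n) (1 : A) = monomial m 1 * monomial n 1 := by simp
    rw [this]
    ring
  rw [h, map_add]
  refine add_mem (add_mem ?_ ?_) ?_
  · exact mul_mem_degLT hf hg (by omega)
  · exact mul_mem_degLT (monomial_mem_degLT m 1) hg (by omega)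
  · exact mul_mem_degLT hf (monomial_mem_degLT n 1) (by omega)

lemma HasLead.pow {f : MvPolynomial ℕ A} {m : ℕ →₀ ℕ} (hf : HasLead f m) (k : ℕ) :
    HasLead (f ^ k) (k • m) := by
  induction k with
  | zero => simpa using hasLead_monomial (A := A) 0
  | succ k ih =>
    rw [pow_succ, succ_nsmul]
    exact ih.mul hf

lemma hasLead_prod {r : ℕ → MvPolynomial ℕ A} {u : ℕ → ℕ →₀ ℕ} (hr : ∀ i, HasLead (r i) (u i))
    (s : Finset ℕ) (k : ℕ → ℕ) : HasLead (∏ i ∈ s, r i ^ k i) (∑ i ∈ s, k i • u i) := by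
  classical
  induction s using Finset.induction_on with
  | empty => simpa using hasLead_monomial (A := A) 0
  | insert i s hi ih =>
    rw [Finset.prod_insert hi, Finset.sum_insert hi]
    exact ((hr i).pow _).mul ih

variable (p : ℕ) (r : ℕ → MvPolynomial ℕ A)

/-- Write `m = p * k + e` with all entries of `e` smaller than `p`. This is `r ^ k * X ^ e`. -/
noncomputable def std (m : ℕ →₀ ℕ) : MvPolynomial ℕ A :=
  ((m.mapRange (· / p) (Nat.zero_div p)).prod fun i k => r i ^ k) *
    monomial (m.mapRange (· % p) (Nat.zero_mod p)) 1

variable {p r}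

lemma std_add_single (hp : 0 < p) (m : ℕ →₀ ℕ) (i : ℕ) :
    std p r (m + Finsupp.single i p) = r i * std p r m := by
  have h1 : (m + Finsupp.single i p).mapRange (· / p) (Nat.zero_div p)
      = m.mapRange (· / p) (Nat.zero_div p) + Finsupp.single i 1 := by
    ext j
    by_cases h : i = j
    · subst h; simp [Nat.add_div_right _ hp]
    · simp [h]
  have h2 : (m + Finsupp.single i p).mapRange (· % p) (Nat.zero_mod p)
      = m.mapRange (· % p) (Nat.zero_mod p) := by
    ext j
    by_cases h : i = j
    · subst h; simp
    · simp [h]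
  rw [std, std, h1, h2, Finsupp.prod_add_index' (by simp) (by intros; rw [pow_add])]
  simp
  ring

lemma hasLead_std (hr : ∀ i, HasLead (r i) (Finsupp.single i p)) (m : ℕ →₀ ℕ) :
    HasLead (std p r m) m := by
  have h := (hasLead_prod hr (m.mapRange (· / p) (Nat.zero_div p)).support
    (m.mapRange (· / p) (Nat.zero_div p))).mul
    (hasLead_monomial (m.mapRange (· % p) (Nat.zero_mod p)))
  have h2 : ∑ i ∈ (m.mapRange (· / p) (Nat.zero_div p)).support,
      (m.mapRange (· / p) (Nat.zero_div p)) i • Finsupp.single i p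
      = p • m.mapRange (· / p) (Nat.zero_div p) := by
    conv_rhs => rw [← Finsupp.sum_single (m.mapRange (· / p) (Nat.zero_div p)), Finsupp.sum,
      Finset.smul_sum]
    refine Finset.sum_congr rfl fun i _ => ?_
    simp [mul_comm]
  have h3 : p • m.mapRange (· / p) (Nat.zero_div p) + m.mapRange (· % p) (Nat.zero_mod p) = m := by
    ext j
    simp [Nat.div_add_mod]
  rw [h2, h3] at h
  exact h

variable (p r) in
/-- The linear endomorphism taking the monomial `m` to `std p r m`. -/
noncomputable def stdMap : MvPolynomial ℕ A →ₗ[A] MvPolynomial ℕ A :=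
  (basisMonomials ℕ A).constr A (std p r)

lemma stdMap_monomial (m : ℕ →₀ ℕ) : stdMap p r (monomial m 1) = std p r m :=
  (basisMonomials ℕ A).constr_basis A (std p r) m

lemma stdMap_sub_mem (hr : ∀ i, HasLead (r i) (Finsupp.single i p)) {d : ℕ}
    {f : MvPolynomial ℕ A} (hf : f ∈ degLT A (d + 1)) : stdMap p r f - f ∈ degLT A d := by
  rw [degLT, restrictSupport_eq_span] at hf
  induction hf using Submodule.span_induction with
  | mem x hx =>
    obtain ⟨m, hm, rfl⟩ := hx
    simp only [stdMap_monomial]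
    exact degLT_mono (Nat.lt_succ_iff.mp hm) (hasLead_std hr m)
  | zero => simp
  | add x y _ _ hx hy =>
    rw [map_add, add_sub_add_comm]
    exact add_mem hx hy
  | smul a x _ hx =>
    rw [map_smul, ← smul_sub]
    exact Submodule.smul_mem _ _ hx

lemma exists_mem_degLT (f : MvPolynomial ℕ A) : ∃ d, f ∈ degLT A d := by
  refine ⟨f.support.sup Finsupp.degree + 1, ?_⟩
  rw [mem_restrictSupport_iff]
  intro m hm
  exact Nat.lt_succ_of_le (Finset.le_sup (f := Finsupp.degree) hm)

lemma eq_zero_of_mem_degLT_zero {f : MvPolynomial ℕ A} (hf : f ∈ degLT A 0) : f = 0 := by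
  rw [mem_restrictSupport_iff] at hf
  simpa using hf

/-- Since `stdMap` is the identity up to terms of smaller degree, it is bijective. -/
lemma stdMap_bijective (hr : ∀ i, HasLead (r i) (Finsupp.single i p)) :
    Function.Bijective (stdMap p r) := by
  constructor
  · rw [injective_iff_map_eq_zero]
    intro f hf
    obtain ⟨d, hd⟩ := exists_mem_degLT f
    induction d with
    | zero => exact eq_zero_of_mem_degLT_zero hd
    | succ d ih =>
      have h := stdMap_sub_mem hr hd
      rw [hf, zero_sub, neg_mem_iff] at h
      exact ih h
  · intro f
    obtain ⟨d, hd⟩ := exists_mem_degLT f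
    induction d generalizing f with
    | zero => exact ⟨0, by rw [eq_zero_of_mem_degLT_zero hd, map_zero]⟩
    | succ d ih =>
      obtain ⟨g, hg⟩ := ih _ (stdMap_sub_mem hr hd)
      exact ⟨f - g, by rw [map_sub, hg, sub_sub_cancel]⟩

/-- The basis `r ^ k * X ^ e` of the polynomial ring. -/
noncomputable def stdBasis (hr : ∀ i, HasLead (r i) (Finsupp.single i p)) :
    Module.Basis (ℕ →₀ ℕ) A (MvPolynomial ℕ A) :=
  (basisMonomials ℕ A).map (LinearEquiv.ofBijective (stdMap p r) (stdMap_bijective hr))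

lemma stdBasis_apply (hr : ∀ i, HasLead (r i) (Finsupp.single i p)) (m : ℕ →₀ ℕ) :
    stdBasis hr m = std p r m := by
  simp [stdBasis, stdMap_monomial]

/-- The quotient by the `r i` is free over `A` on the reduced monomials. The kernel of the linear
projection to the coordinates `X ^ e` with all exponents less than `p` is the ideal. -/
lemma faithfullyFlat_quotient (hp : 0 < p) (hr : ∀ i, HasLead (r i) (Finsupp.single i p)) :
    Module.FaithfullyFlat A (MvPolynomial ℕ A ⧸ Ideal.span (Set.range r)) := by
  let red : Set (ℕ →₀ ℕ) := {m | ∀ i, m i < p}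
  let π : MvPolynomial ℕ A →ₗ[A] (red →₀ A) :=
    (Finsupp.lsubtypeDomain red).comp (stdBasis hr).repr.toLinearMap
  have hπ : ∀ f (m : red), π f m = (stdBasis hr).repr f m := fun f m => rfl
  have hsurj : Function.Surjective π := by
    intro g
    obtain ⟨f, hf⟩ := (stdBasis hr).repr.surjective (g.embDomain (Function.Embedding.subtype _))
    refine ⟨f, ?_⟩
    ext m
    rw [hπ, hf]
    exact Finsupp.embDomain_apply_self _ _ m
  have hmul : ∀ i f, π (f * r i) = 0 := by
    intro i
    suffices h : π.comp (LinearMap.mulRight A (r i)) = 0 from fun f => LinearMap.congr_fun h f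
    refine (stdBasis hr).ext fun m => ?_
    ext n
    have hne : m + Finsupp.single i p ≠ n := by
      intro h
      have h1 := n.2 i
      rw [← h] at h1
      simp at h1
    simp only [LinearMap.comp_apply, LinearMap.mulRight_apply, stdBasis_apply, hπ]
    rw [mul_comm, ← std_add_single hp, ← stdBasis_apply hr, Module.Basis.repr_self]
    simp [hne]
  have hker : LinearMap.ker π = (Ideal.span (Set.range r)).restrictScalars A := by
    ext f
    rw [LinearMap.mem_ker, Submodule.restrictScalars_mem]
    constructor
    · intro hf
      rw [← (stdBasis hr).linearCombination_repr f, Finsupp.linearCombination_apply]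
      refine Submodule.sum_mem _ fun m _ => ?_
      by_cases hm : m ∈ red
      · have h0 : (stdBasis hr).repr f m = 0 := by
          rw [← hπ f ⟨m, hm⟩, hf]; rfl
        simp [h0]
      · obtain ⟨i, hi⟩ : ∃ i, p ≤ m i := by simpa [red] using hm
        have hm' : m = (m - Finsupp.single i p) + Finsupp.single i p := by
          rw [tsub_add_cancel_of_le]
          simpa using hi
        change (stdBasis hr).repr f m • stdBasis hr m ∈ _
        have h1 : stdBasis hr m = r i * std p r (m - Finsupp.single i p) := by
          rw [stdBasis_apply, ← std_add_single hp, ← hm']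
        rw [h1, Algebra.smul_def]
        exact Ideal.mul_mem_left _ _ (Ideal.mul_mem_right _ _ (Ideal.subset_span ⟨i, rfl⟩))
    · intro hf
      obtain ⟨c, rfl⟩ := (Finsupp.mem_ideal_span_range_iff_exists_finsupp).mp hf
      rw [Finsupp.sum, map_sum]
      exact Finset.sum_eq_zero fun i _ => hmul i _
  have : Nonempty red := ⟨⟨0, fun _ => hp⟩⟩
  have e : (MvPolynomial ℕ A ⧸ Ideal.span (Set.range r)) ≃ₗ[A] (red →₀ A) :=
    (Submodule.Quotient.restrictScalarsEquiv A (Ideal.span (Set.range r))).symm.trans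
      ((Submodule.quotEquivOfEq _ _ hker.symm).trans (π.quotKerEquivOfSurjective hsurj))
  exact Module.FaithfullyFlat.of_linearEquiv A (red →₀ A) e

end Basis

/-! ### Adjoining a preimage under the Frobenius lift -/

/-- Given a δ-ring `A` and `x ∈ A`, there is a faithfully flat map of δ-rings `f : A → B`
and an element `y ∈ B` with `f(x) = φ_B(y) = y^p + p·δ_B(y)`. -/
theorem stmt3 (p : ℕ) [Fact p.Prime] {A : Type u} [CommRing A] (δA : A → A)
    (hδA : IsDeltaStructure p δA) (x : A) :
    ∃ (B : Type u) (_ : CommRing B) (δB : B → B) (f : A →+* B),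
      IsDeltaStructure p δB ∧
      (∀ a : A, f (δA a) = δB (f a)) ∧
      (@Module.FaithfullyFlat A B _ _ f.toModule) ∧
      ∃ y : B, f x = y ^ p + (p : B) * δB y := by
  have hp : p.Prime := Fact.out
  let r : ℕ → MvPolynomial ℕ A := fun i =>
    MvPolynomial.X i ^ p + (p : MvPolynomial ℕ A) * MvPolynomial.X (i + 1)
      - MvPolynomial.C (δA^[i] x)
  let B := MvPolynomial ℕ A ⧸ Ideal.span (Set.range r)
  let q : MvPolynomial ℕ A →+* B := Ideal.Quotient.mk _
  let f : A →+* B := algebraMap A B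
  let y : ℕ → B := fun i => q (MvPolynomial.X i)
  have hf : ∀ a, q (MvPolynomial.C a) = f a := fun a => rfl
  have hy : ∀ i, y i ^ p + (p : B) * y (i + 1) = f (δA^[i] x) := by
    intro i
    have h : q (r i) = 0 := Ideal.Quotient.eq_zero_iff_mem.mpr (Ideal.subset_span ⟨i, rfl⟩)
    simpa [r, y, hf, sub_eq_zero] using h
  let s₀ : MvPolynomial ℕ A →+* WTwo p B :=
    MvPolynomial.eval₂Hom ((WTwo.map f).comp (deltaSection hδA)) fun i => ⟨y i, y (i + 1)⟩
  have hC : ∀ a, s₀ (MvPolynomial.C a) = ⟨f a, f (δA a)⟩ := fun a => by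
    simp only [s₀, MvPolynomial.coe_eval₂Hom, MvPolynomial.eval₂_C]
    rfl
  have hX : ∀ i, s₀ (MvPolynomial.X i) = ⟨y i, y (i + 1)⟩ := fun i => by
    simp [s₀]
  -- The section descends to the quotient because `δ` and `φ` commute: applying `δ` to the
  -- relation with index `i` gives the relation with index `i + 1`.
  have hker : ∀ g ∈ Ideal.span (Set.range r), s₀ g = 0 := by
    intro g hg
    refine (Ideal.span_le (I := RingHom.ker s₀)).mpr ?_ hg
    rintro _ ⟨i, rfl⟩
    change s₀ (r i) = 0
    simp only [r, map_sub, map_add, map_mul, map_pow, map_natCast, hC, hX]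
    rw [WTwo.frobenius_eq, hy, hy, Function.iterate_succ_apply', sub_self]
  let s : B →+* WTwo p B := Ideal.Quotient.lift _ s₀ hker
  have hsq : ∀ g, s (q g) = s₀ g := fun g => Ideal.Quotient.lift_mk _ _ _
  have hs : ∀ b, (s b).fst = b := by
    have h : ((WTwo.fstHom p B).comp s).comp q = q := by
      refine MvPolynomial.ringHom_ext (fun a => ?_) fun i => ?_
      · simp only [RingHom.comp_apply, hsq, hC]; rfl
      · simp only [RingHom.comp_apply, hsq, hX]; rfl
    intro b
    obtain ⟨g, rfl⟩ := Ideal.Quotient.mk_surjective b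
    exact RingHom.congr_fun h g
  have hr : ∀ i, HasLead (r i) (Finsupp.single i p) := by
    intro i
    have h1 : r i - MvPolynomial.monomial (Finsupp.single i p) 1
        = MvPolynomial.monomial (Finsupp.single (i + 1) 1) (p : A)
          - MvPolynomial.monomial 0 (δA^[i] x) := by
      have h2 : MvPolynomial.monomial (Finsupp.single (i + 1) 1) (p : A)
          = (p : MvPolynomial ℕ A) * MvPolynomial.X (i + 1) := by
        rw [← map_natCast (MvPolynomial.C (σ := ℕ) (R := A)), MvPolynomial.C_mul_X_eq_monomial]
      rw [h2, ← MvPolynomial.X_pow_eq_monomial]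
      simp only [r, MvPolynomial.C_apply]
      ring
    rw [HasLead, h1]
    refine sub_mem ?_ ?_
    · simp [hp.one_lt]
    · rw [MvPolynomial.monomial_mem_restrictSupport]
      simp [hp.pos]
  refine ⟨B, inferInstance, fun b => (s b).snd, f, isDeltaStructure_of_section s hs, ?_, ?_, y 0, ?_⟩
  · intro a
    change f (δA a) = (s (q (MvPolynomial.C a))).snd
    rw [hsq, hC]
  · have hmod : f.toModule = (inferInstance : Module A B) := by
      refine Module.ext' _ _ fun a b => ?_
      exact (Algebra.smul_def a b).symm
    rw [hmod]
    exact faithfullyFlat_quotient hp.pos hr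
  · have h0 : (s (y 0)).snd = y 1 := by rw [hsq, hX]
    change f x = y 0 ^ p + (p : B) * (s (y 0)).snd
    rw [h0]
    exact (hy 0).symm
end

section
/- Fix a δ-ring A and an element d ∈ A such that both d and p lie in the Jacobson radical rad(A). Then d is distinguished (δ(d) is a unit) if and only if p lies in the ideal (d, φ(d)) generated by d and φ(d) = d^p + p·δ(d). -/
lemma natCast_mul_deltaE (p : ℕ) [hp : Fact p.Prime] {A : Type*} [CommRing A] (x y : A) :
    (p : A) * deltaE p x y = x ^ p + y ^ p - (x + y) ^ p := by
  rw [add_pow_prime_eq hp.out x y, deltaE]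
  have h : ∑ i ∈ Finset.Ioo 0 p, ((p.choose i / p : ℕ) : A) * x ^ i * y ^ (p - i)
      = x * y * ∑ k ∈ Finset.Ioo 0 p,
        x ^ (k - 1) * y ^ (p - k - 1) * ((p.choose k / p : ℕ) : A) := by
    rw [Finset.mul_sum]
    refine Finset.sum_congr rfl fun i hi => ?_
    rw [Finset.mem_Ioo] at hi
    rw [← mul_pow_sub_one (show i ≠ 0 by omega) x,
      ← mul_pow_sub_one (show p - i ≠ 0 by omega) y]
    ring
  rw [h]
  ring

/-- The value `δ(n)` is the image of the integer `(n - n ^ p) / p`. Phrasing this through an integer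
`k` is what allows division by `p`, which may be a zero divisor in `A`. -/
lemma IsDeltaStructure.map_natCast {p : ℕ} [Fact p.Prime] {A : Type*} [CommRing A] {δ : A → A}
    (hδ : IsDeltaStructure p δ) (n : ℕ) :
    ∃ k : ℤ, δ (n : A) = (k : A) ∧ (p : ℤ) * k = n - (n : ℤ) ^ p := by
  induction n with
  | zero => exact ⟨0, by simp [hδ.map_zero], by simp [(Fact.out : p.Prime).ne_zero]⟩
  | succ n ih =>
    obtain ⟨k, hk, hpk⟩ := ih
    refine ⟨k + deltaE p (n : ℤ) 1, ?_, ?_⟩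
    · rw [Nat.cast_succ, hδ.map_add, hk, hδ.map_one]
      simp [deltaE, -Nat.cast_div, -Int.natCast_ediv]
    · rw [mul_add, hpk, natCast_mul_deltaE]
      push_cast
      ring

lemma IsDeltaStructure.map_prime {p : ℕ} [hp : Fact p.Prime] {A : Type*} [CommRing A] {δ : A → A}
    (hδ : IsDeltaStructure p δ) : δ (p : A) = 1 - (p : A) ^ (p - 1) := by
  obtain ⟨k, hk, hpk⟩ := hδ.map_natCast p
  have hp0 : (p : ℤ) ≠ 0 := by exact_mod_cast hp.out.ne_zero
  have h : k = 1 - (p : ℤ) ^ (p - 1) := by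
    apply mul_left_cancel₀ hp0
    rw [hpk, mul_sub, mul_one, mul_pow_sub_one hp.out.ne_zero]
  rw [hk, h]
  push_cast
  rfl

/-- In a δ-ring `A` with `d` and `p` in the Jacobson radical, `d` is distinguished if and
only if `p ∈ (d, φ(d))`, where `φ(d) = d^p + p·δ(d)`. -/
theorem stmt9 (p : ℕ) [Fact p.Prime] {A : Type*} [CommRing A] (δ : A → A)
    (hδ : IsDeltaStructure p δ) (d : A)
    (hdrad : d ∈ (⊥ : Ideal A).jacobson) (hprad : (p : A) ∈ (⊥ : Ideal A).jacobson) :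
    IsUnit (δ d) ↔ (p : A) ∈ Ideal.span {d, d ^ p + (p : A) * δ d} := by
  have hp : p.Prime := Fact.out
  have hdp : d * d ^ (p - 1) = d ^ p := mul_pow_sub_one hp.ne_zero d
  rw [Ideal.mem_span_pair]
  constructor
  · rintro ⟨u, hu⟩
    have hinv : (↑u⁻¹ : A) * δ d = 1 := by rw [← hu, Units.inv_mul]
    refine ⟨-(↑u⁻¹ * d ^ (p - 1)), ↑u⁻¹, ?_⟩
    linear_combination (-(↑u⁻¹ : A)) * hdp + (p : A) * hinv
  · rintro ⟨a, b, hab⟩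
    by_contra hnu
    obtain ⟨m, hm, hδm⟩ := exists_max_ideal_of_mem_nonunits hnu
    have hle : (⊥ : Ideal A).jacobson ≤ m := sInf_le ⟨bot_le, hm⟩
    have hd : Ideal.Quotient.mk m d = 0 := Ideal.Quotient.eq_zero_iff_mem.2 (hle hdrad)
    have hpm : Ideal.Quotient.mk m (p : A) = 0 := Ideal.Quotient.eq_zero_iff_mem.2 (hle hprad)
    have hδd : Ideal.Quotient.mk m (δ d) = 0 := Ideal.Quotient.eq_zero_iff_mem.2 hδm
    have key : (p : A) * (1 - b * δ d) = (a + b * d ^ (p - 1)) * d := by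
      linear_combination -hab - b * hdp
    have h := congrArg (fun x => Ideal.Quotient.mk m (δ x)) key
    simp only [hδ.map_mul (p : A), hδ.map_mul _ d, hδ.map_prime, map_add, map_mul, map_sub,
      map_pow, map_one, hd, hpm, hδd, zero_pow hp.ne_zero,
      zero_pow (Nat.sub_ne_zero_of_lt hp.one_lt), mul_zero, zero_mul, sub_zero, one_pow,
      mul_one, add_zero, zero_add] at h
    have : Nontrivial (A ⧸ m) := Ideal.Quotient.nontrivial_iff.2 hm.ne_top
    exact one_ne_zero h
end
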